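/- For every x ∈ ℝ, the new 6-point kernel satisfies the first moment condition: ∑_{j∈ℤ} (x − j)·φ(x − j) = 0. -/

import Mathlib

noncomputable section

namespace IB6

/-- The special second-moment constant `K = 59/60 − √29/20`. -/
def K : ℝ := 59 / 60 - Real.sqrt 29 / 20

/-- `α = 28`. -/
def a : ℝ := 28

/-- `β(r)`. -/
def b (r : ℝ) : ℝ :=
  9 / 4 - (3 / 2) * (K + r ^ 2) * r + (22 / 3 - 7 * K) * r - (7 / 3) * r ^ 3

/-- `γ(r)`. -/
def c (r : ℝ) : ℝ :=
  -(11 / 32) * r ^ 2 + (3 / 32) * (2 * K + r ^ 2) * r ^ 2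
    + (1 / 72) * ((3 * K - 1) * r + r ^ 3) ^ 2
    + (1 / 18) * ((4 - 3 * K) * r - r ^ 3) ^ 2

/-- `p₋₃(r) = (−β(r) + √(β(r)² − 4αγ(r)))/(2α)`. -/
def pm3 (r : ℝ) : ℝ := (-b r + Real.sqrt (b r ^ 2 - 4 * a * c r)) / (2 * a)

/-- `p₋₂(r)`. -/
def pm2 (r : ℝ) : ℝ :=
  -3 * pm3 r - 1 / 16 + (K + r ^ 2) / 8 + (3 * K - 1) * r / 12 + r ^ 3 / 12

/-- `p₋₁(r)`. -/
def pm1 (r : ℝ) : ℝ := 2 * pm3 r + 1 / 4 + (4 - 3 * K) * r / 6 - r ^ 3 / 6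

/-- `p₀(r)`. -/
def p0 (r : ℝ) : ℝ := 2 * pm3 r + 5 / 8 - (K + r ^ 2) / 4

/-- `p₁(r)`. -/
def p1 (r : ℝ) : ℝ := -3 * pm3 r + 1 / 4 - (4 - 3 * K) * r / 6 + r ^ 3 / 6

/-- `p₂(r)`. -/
def p2 (r : ℝ) : ℝ :=
  pm3 r - 1 / 16 + (K + r ^ 2) / 8 - (3 * K - 1) * r / 12 - r ^ 3 / 12

/-- The new 6-point immersed-boundary kernel `φ`. -/
def phi (x : ℝ) : ℝ :=
  if -3 ≤ x ∧ x < -2 then pm3 (x - (-3))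
  else if -2 ≤ x ∧ x < -1 then pm2 (x - (-2))
  else if -1 ≤ x ∧ x < 0 then pm1 (x - (-1))
  else if 0 ≤ x ∧ x < 1 then p0 (x - 0)
  else if 1 ≤ x ∧ x < 2 then p1 (x - 1)
  else if 2 ≤ x ∧ x < 3 then p2 (x - 2)
  else 0

/-!
The integer translates of `x` that meet the support of `φ` are `r - 3, …, r + 2`, where `r` is the
fractional part of `x`. So the sum over `ℤ` is a combination of the six pieces `pₖ(r)`, whose
coefficient of `p₋₃(r)` is `(r - 3) - 3(r - 2) + 2(r - 1) + 2r - 3(r + 1) + (r + 2) = 0`. What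
remains is a polynomial in `r` and `K` that vanishes identically, so neither the quadratic equation
defining `p₋₃` nor the value of `K` matters.
-/

section Lattice

variable {R M : Type*} [Ring R] [LinearOrder R] [FloorRing R] [AddCommMonoid M]
  [TopologicalSpace M]

theorem tsum_sub_intCast_eq_tsum_fract_add_intCast (f : R → M) (x : R) :
    ∑' j : ℤ, f (x - j) = ∑' k : ℤ, f (Int.fract x + k) := by
  rw [← (Equiv.subLeft ⌊x⌋).tsum_eq]
  refine tsum_congr fun k => congrArg f ?_
  rw [Equiv.subLeft_apply, Int.cast_sub, Int.fract, sub_sub_eq_add_sub, sub_add_eq_add_sub]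

variable [IsStrictOrderedRing R]

theorem fract_add_intCast_mem_Ico_iff {x : R} {k m n : ℤ} :
    Int.fract x + k ∈ Set.Ico (m : R) n ↔ k ∈ Finset.Ico m n := by
  have floor_eq : ⌊Int.fract x + k⌋ = k := by
    rw [Int.floor_add_intCast, Int.floor_fract, zero_add]
  rw [Set.mem_Ico, Finset.mem_Ico, ← Int.le_floor, ← Int.floor_lt, floor_eq]

theorem tsum_sub_intCast_eq_sum_Ico {f : R → M} {m n : ℤ}
    (hf : Function.support f ⊆ Set.Ico (m : R) n) (x : R) :
    ∑' j : ℤ, f (x - j) = ∑ k ∈ Finset.Ico m n, f (Int.fract x + k) := by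
  rw [tsum_sub_intCast_eq_tsum_fract_add_intCast]
  exact tsum_eq_sum fun k hk => Function.notMem_support.1 fun hfk =>
    hk (fract_add_intCast_mem_Ico_iff.1 (hf hfk))

end Lattice

theorem support_phi_subset : Function.support phi ⊆ Set.Ico (-3) 3 := by
  refine Function.support_subset_iff'.2 fun x hx => ?_
  grind [phi]

section Pieces

variable {r : ℝ}

theorem phi_sub_three (hr : r ∈ Set.Ico 0 1) : phi (r - 3) = pm3 r := by
  grind [phi]

theorem phi_sub_two (hr : r ∈ Set.Ico 0 1) : phi (r - 2) = pm2 r := by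
  grind [phi]

theorem phi_sub_one (hr : r ∈ Set.Ico 0 1) : phi (r - 1) = pm1 r := by
  grind [phi]

theorem phi_of_mem_Ico_zero_one (hr : r ∈ Set.Ico 0 1) : phi r = p0 r := by
  grind [phi]

theorem phi_add_one (hr : r ∈ Set.Ico 0 1) : phi (r + 1) = p1 r := by
  grind [phi]

theorem phi_add_two (hr : r ∈ Set.Ico 0 1) : phi (r + 2) = p2 r := by
  grind [phi]

theorem first_moment_pieces_eq_zero (r : ℝ) :
    (r - 3) * pm3 r + (r - 2) * pm2 r + (r - 1) * pm1 r + r * p0 r + (r + 1) * p1 r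
      + (r + 2) * p2 r = 0 := by
  unfold pm2 pm1 p0 p1 p2
  ring

theorem sum_Ico_add_mul_phi_add_eq_zero (hr : r ∈ Set.Ico 0 1) :
    ∑ k ∈ Finset.Ico (-3 : ℤ) 3, (r + k) * phi (r + k) = 0 := by
  have translates : Finset.Ico (-3 : ℤ) 3 = {-3, -2, -1, 0, 1, 2} := by decide
  calc ∑ k ∈ Finset.Ico (-3 : ℤ) 3, (r + k) * phi (r + k)
    _ = (r - 3) * phi (r - 3) + (r - 2) * phi (r - 2) + (r - 1) * phi (r - 1) + r * phi r
          + (r + 1) * phi (r + 1) + (r + 2) * phi (r + 2) := by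
      simp [translates, ← sub_eq_add_neg, add_assoc]
    _ = (r - 3) * pm3 r + (r - 2) * pm2 r + (r - 1) * pm1 r + r * p0 r + (r + 1) * p1 r
          + (r + 2) * p2 r := by
      rw [phi_sub_three hr, phi_sub_two hr, phi_sub_one hr, phi_of_mem_Ico_zero_one hr,
        phi_add_one hr, phi_add_two hr]
    _ = 0 := first_moment_pieces_eq_zero r

end Pieces

/-- First moment condition: `∑_{j∈ℤ} (x − j)·φ(x − j) = 0` for all `x`. -/
theorem new6pt_first_moment (x : ℝ) : ∑' j : ℤ, (x - j) * phi (x - j) = 0 := by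
  have support_subset :
      Function.support (fun y => y * phi y) ⊆ Set.Ico ((-3 : ℤ) : ℝ) (3 : ℤ) := by
    push_cast
    exact (Function.support_mul_subset_right id phi).trans support_phi_subset
  calc ∑' j : ℤ, (x - j) * phi (x - j)
    _ = ∑ k ∈ Finset.Ico (-3 : ℤ) 3, (Int.fract x + k) * phi (Int.fract x + k) :=
      tsum_sub_intCast_eq_sum_Ico support_subset x
    _ = 0 := sum_Ico_add_mul_phi_add_eq_zero ⟨Int.fract_nonneg x, Int.fract_lt_one x⟩

end IB6
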